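/- For every ξ ∈ [0,1] and every x with 0 ≤ x ≤ L1max(ξ), L2(ξ, x) ≤ L2(1/2, x): for a fixed horizontal side length x, the maximal vertical side length of an axis-aligned rectangle inside P centered on the diagonal point D(ξ) is maximized at ξ = 1/2. (Lemma 4) -/

import Mathlib

/-!
The result rests on `P` being convex, centrally symmetric and bounded. The point reflection
`v ↦ D(1) - v` preserves `P` and sends `Rect x L (D ξ)` to `Rect x L (D (1 - ξ))`. If the former
lies in `P`, so does the latter, and by convexity so does their midpoint translate
`Rect x L (D (1/2))`. Hence every height admissible at `ξ` is admissible at `1/2`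
(`rect_half_subset`). Admissible heights are bounded because `P` is
(`bddAbove_heights`), so the suprema compare.
-/

noncomputable section

/-- The parallelogram `P = { (h11·s + h12·t, h21·s + h22·t) : s,t ∈ [0,1] }`. -/
def Pgram (h11 h12 h21 h22 : ℝ) : Set (ℝ × ℝ) :=
  { v | ∃ s ∈ Set.Icc (0:ℝ) 1, ∃ t ∈ Set.Icc (0:ℝ) 1,
      v = (h11 * s + h12 * t, h21 * s + h22 * t) }

/-- The point `D(ξ)` on the diagonal of the parallelogram. -/
def Dpt (h11 h12 h21 h22 ξ : ℝ) : ℝ × ℝ := (ξ * (h11 + h12), ξ * (h21 + h22))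

/-- Closed axis-aligned rectangle with horizontal side `L1`, vertical side `L2`, midpoint `c`. -/
def Rect (L1 L2 : ℝ) (c : ℝ × ℝ) : Set (ℝ × ℝ) :=
  { v | |v.1 - c.1| ≤ L1 / 2 ∧ |v.2 - c.2| ≤ L2 / 2 }

/-- `L1max(ξ)`: sup of horizontal segment lengths centered at `D(ξ)` fitting inside `P`. -/
def L1max (h11 h12 h21 h22 ξ : ℝ) : ℝ :=
  sSup { L1 | L1 ≥ 0 ∧ Rect L1 0 (Dpt h11 h12 h21 h22 ξ) ⊆ Pgram h11 h12 h21 h22 }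

/-- `L2(ξ, x)`: sup of vertical side lengths of rectangles with horizontal side `x`
centered at `D(ξ)` fitting inside `P`. -/
def L2fun (h11 h12 h21 h22 ξ x : ℝ) : ℝ :=
  sSup { L2 | L2 ≥ 0 ∧ Rect x L2 (Dpt h11 h12 h21 h22 ξ) ⊆ Pgram h11 h12 h21 h22 }

/-- Rectangle with horizontal side `x` extended vertically upwards from `c` by `L2`. -/
def RectUp (x L2 : ℝ) (c : ℝ × ℝ) : Set (ℝ × ℝ) :=
  { v | |v.1 - c.1| ≤ x / 2 ∧ c.2 ≤ v.2 ∧ v.2 ≤ c.2 + L2 }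

/-- Rectangle with horizontal side `x` extended vertically downwards from `c` by `L2`. -/
def RectDown (x L2 : ℝ) (c : ℝ × ℝ) : Set (ℝ × ℝ) :=
  { v | |v.1 - c.1| ≤ x / 2 ∧ c.2 - L2 ≤ v.2 ∧ v.2 ≤ c.2 }

/-- `L2up(ξ, x)`: sup of upward one-sided vertical extensions. -/
def L2up (h11 h12 h21 h22 ξ x : ℝ) : ℝ :=
  sSup { L2 | L2 ≥ 0 ∧ RectUp x L2 (Dpt h11 h12 h21 h22 ξ) ⊆ Pgram h11 h12 h21 h22 }

/-- `L2down(ξ, x)`: sup of downward one-sided vertical extensions. -/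
def L2down (h11 h12 h21 h22 ξ x : ℝ) : ℝ :=
  sSup { L2 | L2 ≥ 0 ∧ RectDown x L2 (Dpt h11 h12 h21 h22 ξ) ⊆ Pgram h11 h12 h21 h22 }

/-- A rectangle centered at `D(ξ)` and contained in `P` can be moved to the center of `P`. -/
theorem rect_half_subset {h11 h12 h21 h22 ξ x L : ℝ}
    (h : Rect x L (Dpt h11 h12 h21 h22 ξ) ⊆ Pgram h11 h12 h21 h22) :
    Rect x L (Dpt h11 h12 h21 h22 (1 / 2)) ⊆ Pgram h11 h12 h21 h22 := by
  rintro ⟨a, b⟩ ⟨ha, hb⟩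
  simp only [Dpt, abs_le] at ha hb
  -- `p = v + D(ξ) - D(1/2)` and `q = D(ξ) + D(1/2) - v` lie in the given rectangle, and
  -- `v` is the midpoint of `p` and of the reflected point `D(1) - q`.
  obtain ⟨s, hs, t, ht, hp⟩ := h (show (a + (ξ - 1 / 2) * (h11 + h12),
      b + (ξ - 1 / 2) * (h21 + h22)) ∈ Rect x L (Dpt h11 h12 h21 h22 ξ) by
    simp only [Rect, Dpt, Set.mem_ofPred_eq, abs_le]
    refine ⟨⟨?_, ?_⟩, ?_, ?_⟩ <;> linarith)
  obtain ⟨s', hs', t', ht', hq⟩ := h (show ((ξ + 1 / 2) * (h11 + h12) - a,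
      (ξ + 1 / 2) * (h21 + h22) - b) ∈ Rect x L (Dpt h11 h12 h21 h22 ξ) by
    simp only [Rect, Dpt, Set.mem_ofPred_eq, abs_le]
    refine ⟨⟨?_, ?_⟩, ?_, ?_⟩ <;> linarith)
  simp only [Prod.mk.injEq] at hp hq
  simp only [Set.mem_Icc] at hs ht hs' ht'
  refine ⟨(s + (1 - s')) / 2, ⟨by linarith, by linarith⟩,
    (t + (1 - t')) / 2, ⟨by linarith, by linarith⟩, ?_⟩
  simp only [Prod.mk.injEq]
  constructor <;> linarith

theorem bddAbove_heights {h11 h12 h21 h22 ξ x : ℝ}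
    (hpos21 : 0 < h21) (hpos22 : 0 < h22) (hx : 0 ≤ x) :
    BddAbove { L | L ≥ 0 ∧
      Rect x L (Dpt h11 h12 h21 h22 ξ) ⊆ Pgram h11 h12 h21 h22 } := by
  refine ⟨2 * (h21 + h22 - ξ * (h21 + h22)), ?_⟩
  rintro L ⟨hL, h⟩
  -- The midpoint of the top side lies in `P`, where the second coordinate is at most `h21 + h22`.
  obtain ⟨s, hs, t, ht, hp⟩ := h (show (ξ * (h11 + h12), ξ * (h21 + h22) + L / 2) ∈
      Rect x L (Dpt h11 h12 h21 h22 ξ) by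
    simp only [Rect, Dpt, Set.mem_ofPred_eq, abs_le]
    refine ⟨⟨?_, ?_⟩, ?_, ?_⟩ <;> linarith)
  simp only [Prod.mk.injEq] at hp
  have h1 := mul_le_of_le_one_right hpos21.le hs.2
  have h2 := mul_le_of_le_one_right hpos22.le ht.2
  linarith [hp.2]

theorem stmt13 (h11 h12 h21 h22 : ℝ)
    (hpos11 : 0 < h11) (hpos12 : 0 < h12) (hpos21 : 0 < h21) (hpos22 : 0 < h22)
    (hdet : h11 * h22 - h12 * h21 < 0) :
    ∀ ξ ∈ Set.Icc (0:ℝ) 1, ∀ x, 0 ≤ x → x ≤ L1max h11 h12 h21 h22 ξ →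
      L2fun h11 h12 h21 h22 ξ x ≤ L2fun h11 h12 h21 h22 (1 / 2) x := by
  intro ξ _ x hx _
  -- `Real.sSup_le` also covers an empty set of heights, whose supremum is `0`.
  refine Real.sSup_le (fun L hL => ?_) (Real.sSup_nonneg fun L hL => hL.1)
  exact le_csSup (bddAbove_heights hpos21 hpos22 hx) ⟨hL.1, rect_half_subset hL.2⟩
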